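/- With the notation of the concrete construction (Ω = ZMod 8 × ZMod k × ZMod r with k odd and r ∈ {1,3}): the subgroup R₁ = ⟨τ₁,ρ₁,ρ₂⟩ of Sym(Ω) acts regularly on Ω, i.e., for all ω, ω' ∈ Ω there is exactly one element of R₁ mapping ω to ω'. -/

import Mathlib

open Equiv

instance : DecidablePred (Even : ZMod 8 → Prop) := fun i =>
  decidable_of_iff (∃ x : ZMod 8, i = x + x) Iff.rfl

/-- The permutation of `ZMod 8` given by the 8-cycle (0 1 2 3 4 5 6 7). -/
def sigma1 : Equiv.Perm (ZMod 8) := Equiv.addRight (1 : ZMod 8)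

/-- The permutation of `ZMod 8` given by the 8-cycle (0 1 6 7 4 5 2 3). -/
def sigma2 : Equiv.Perm (ZMod 8) where
  toFun i := if Even i then i + 1 else i + 5
  invFun i := if Even i then i + 3 else i - 1
  left_inv := by decide
  right_inv := by decide

def tau1 (k r : ℕ) : Equiv.Perm (ZMod 8 × ZMod k × ZMod r) :=
  sigma1.prodCongr (Equiv.refl _)

def tau2 (k r : ℕ) : Equiv.Perm (ZMod 8 × ZMod k × ZMod r) :=
  sigma2.prodCongr (Equiv.refl _)

def rho1 (k r : ℕ) : Equiv.Perm (ZMod 8 × ZMod k × ZMod r) where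
  toFun x := if Even x.1 then (x.1, x.2.1 + 1, x.2.2) else (x.1, x.2.1 - 1, x.2.2)
  invFun x := if Even x.1 then (x.1, x.2.1 - 1, x.2.2) else (x.1, x.2.1 + 1, x.2.2)
  left_inv := by rintro ⟨i, j, l⟩; by_cases h : Even i <;> simp [h]
  right_inv := by rintro ⟨i, j, l⟩; by_cases h : Even i <;> simp [h]

def rho2 (k r : ℕ) : Equiv.Perm (ZMod 8 × ZMod k × ZMod r) where
  toFun x := if Even x.1 then (x.1, x.2.1, x.2.2 + 1) else (x.1, x.2.1, x.2.2 - 1)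
  invFun x := if Even x.1 then (x.1, x.2.1, x.2.2 - 1) else (x.1, x.2.1, x.2.2 + 1)
  left_inv := by rintro ⟨i, j, l⟩; by_cases h : Even i <;> simp [h]
  right_inv := by rintro ⟨i, j, l⟩; by_cases h : Even i <;> simp [h]

/-- The permutation of `ZMod 8 × ZMod k × ZMod r` acting on the first coordinate as the
product of transpositions (1 5)(3 7) and fixing the other coordinates. -/
def hperm (k r : ℕ) : Equiv.Perm (ZMod 8 × ZMod k × ZMod r) :=
  ((Equiv.swap (1 : ZMod 8) 5).trans (Equiv.swap (3 : ZMod 8) 7)).prodCongr (Equiv.refl _)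

def R1 (k r : ℕ) : Subgroup (Equiv.Perm (ZMod 8 × ZMod k × ZMod r)) :=
  Subgroup.closure {tau1 k r, rho1 k r, rho2 k r}

def R2 (k r : ℕ) : Subgroup (Equiv.Perm (ZMod 8 × ZMod k × ZMod r)) :=
  Subgroup.closure {tau2 k r, rho1 k r, rho2 k r}

def Ggrp (k r : ℕ) : Subgroup (Equiv.Perm (ZMod 8 × ZMod k × ZMod r)) :=
  R1 k r ⊔ R2 k r

def Hgrp (k r : ℕ) : Subgroup (Equiv.Perm (ZMod 8 × ZMod k × ZMod r)) :=
  Subgroup.closure {tau1 k r, tau2 k r}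

/-- The sign `1` of an even and `-1` of an odd residue modulo `8`. -/
def paritySign (i : ZMod 8) : ℤ := if Even i then 1 else -1

theorem paritySign_add (i a : ZMod 8) :
    paritySign (i + a) = paritySign i * paritySign a := by
  revert i a; decide

theorem paritySign_sub (i a : ZMod 8) :
    paritySign (i - a) = paritySign i * paritySign a := by
  revert i a; decide

theorem paritySign_mul_self (i : ZMod 8) : paritySign i * paritySign i = 1 := by
  revert i; decide

theorem paritySign_cast_mul_self (n : ℕ) (i : ZMod 8) :
    (paritySign i : ZMod n) * (paritySign i : ZMod n) = 1 := by
  exact_mod_cast congrArg (Int.cast : ℤ → ZMod n) (paritySign_mul_self i)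

theorem tau1_apply (k r : ℕ) (i : ZMod 8) (j : ZMod k) (l : ZMod r) :
    tau1 k r (i, j, l) = (i + 1, j, l) := rfl

theorem rho1_apply (k r : ℕ) (i : ZMod 8) (j : ZMod k) (l : ZMod r) :
    rho1 k r (i, j, l) = (i, j + paritySign i, l) := by
  by_cases h : Even i <;> simp [rho1, paritySign, h, sub_eq_add_neg]

theorem rho2_apply (k r : ℕ) (i : ZMod 8) (j : ZMod k) (l : ZMod r) :
    rho2 k r (i, j, l) = (i, j, l + paritySign i) := by
  by_cases h : Even i <;> simp [rho2, paritySign, h, sub_eq_add_neg]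

theorem tau1_pow_apply (k r n : ℕ) (i : ZMod 8) (j : ZMod k) (l : ZMod r) :
    (tau1 k r ^ n) (i, j, l) = (i + n, j, l) := by
  induction n with
  | zero => simp
  | succ n ih => rw [pow_succ', Perm.mul_apply, ih, tau1_apply]; simp [add_assoc]

theorem rho1_pow_apply (k r n : ℕ) (i : ZMod 8) (j : ZMod k) (l : ZMod r) :
    (rho1 k r ^ n) (i, j, l) = (i, j + paritySign i * n, l) := by
  induction n with
  | zero => simp
  | succ n ih => rw [pow_succ', Perm.mul_apply, ih, rho1_apply]; simp [add_assoc, mul_add]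

theorem rho2_pow_apply (k r n : ℕ) (i : ZMod 8) (j : ZMod k) (l : ZMod r) :
    (rho2 k r ^ n) (i, j, l) = (i, j, l + paritySign i * n) := by
  induction n with
  | zero => simp
  | succ n ih => rw [pow_succ', Perm.mul_apply, ih, rho2_apply]; simp [add_assoc, mul_add]

/-- Every element of `R₁` translates the first coordinate by a constant and the other two by
constants multiplied by the parity sign of the first coordinate. -/
theorem exists_forall_apply_eq_of_mem_R1 {k r : ℕ} {g : Perm (ZMod 8 × ZMod k × ZMod r)}
    (hg : g ∈ R1 k r) :
    ∃ (a : ZMod 8) (b : ZMod k) (c : ZMod r), ∀ i j l,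
      g (i, j, l) = (i + a, j + paritySign i * b, l + paritySign i * c) := by
  induction hg using Subgroup.closure_induction with
  | mem x hx =>
    obtain rfl | rfl | rfl := hx
    · exact ⟨1, 0, 0, fun i j l => by simp [tau1_apply]⟩
    · exact ⟨0, 1, 0, fun i j l => by simp [rho1_apply]⟩
    · exact ⟨0, 0, 1, fun i j l => by simp [rho2_apply]⟩
  | one => exact ⟨0, 0, 0, fun i j l => by simp⟩
  | mul x y _ _ hx hy =>
    obtain ⟨a, b, c, hx⟩ := hx
    obtain ⟨a', b', c', hy⟩ := hy
    refine ⟨a' + a, b' + paritySign a' * b, c' + paritySign a' * c, fun i j l => ?_⟩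
    rw [Perm.mul_apply, hy, hx, paritySign_add]
    push_cast
    ext <;> ring
  | inv x _ hx =>
    obtain ⟨a, b, c, hx⟩ := hx
    refine ⟨-a, -(paritySign a * b), -(paritySign a * c), fun i j l => ?_⟩
    rw [Perm.inv_eq_iff_eq, hx, ← sub_eq_add_neg, paritySign_sub]
    push_cast
    ext <;> ring

theorem eq_of_mem_R1_of_apply_eq {k r : ℕ} {g h : Perm (ZMod 8 × ZMod k × ZMod r)}
    (hg : g ∈ R1 k r) (hh : h ∈ R1 k r) {ω : ZMod 8 × ZMod k × ZMod r} (hω : g ω = h ω) :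
    g = h := by
  obtain ⟨a, b, c, hg⟩ := exists_forall_apply_eq_of_mem_R1 hg
  obtain ⟨a', b', c', hh⟩ := exists_forall_apply_eq_of_mem_R1 hh
  obtain ⟨i, j, l⟩ := ω
  simp only [hg, hh, Prod.mk.injEq, add_right_inj] at hω
  obtain ⟨rfl, hb, hc⟩ := hω
  obtain rfl : b = b' := by
    linear_combination (paritySign i : ZMod k) * hb + (b' - b) * paritySign_cast_mul_self k i
  obtain rfl : c = c' := by
    linear_combination (paritySign i : ZMod r) * hc + (c' - c) * paritySign_cast_mul_self r i
  ext1 ⟨i, j, l⟩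
  rw [hg, hh]

theorem exists_mem_R1_apply_eq (k r : ℕ) [NeZero k] [NeZero r]
    (ω ω' : ZMod 8 × ZMod k × ZMod r) : ∃ g ∈ R1 k r, g ω = ω' := by
  obtain ⟨i, j, l⟩ := ω
  obtain ⟨i', j', l'⟩ := ω'
  obtain ⟨p, hp⟩ := ZMod.natCast_zmod_surjective (i' - i)
  obtain ⟨m, hm⟩ := ZMod.natCast_zmod_surjective ((paritySign i' : ZMod k) * (j' - j))
  obtain ⟨n, hn⟩ := ZMod.natCast_zmod_surjective ((paritySign i' : ZMod r) * (l' - l))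
  refine ⟨rho2 k r ^ n * (rho1 k r ^ m * tau1 k r ^ p), ?_, ?_⟩
  · refine mul_mem (pow_mem (Subgroup.subset_closure ?_) _)
      (mul_mem (pow_mem (Subgroup.subset_closure ?_) _)
        (pow_mem (Subgroup.subset_closure ?_) _)) <;> simp
  · rw [Perm.mul_apply, Perm.mul_apply, tau1_pow_apply, rho1_pow_apply, rho2_pow_apply, hp,
      add_sub_cancel, hm, hn, ← mul_assoc, ← mul_assoc, paritySign_cast_mul_self,
      paritySign_cast_mul_self]
    simp

/-- `R₁ = ⟨τ₁, ρ₁, ρ₂⟩` acts regularly on `Ω`: for all `ω, ω' ∈ Ω` there is exactly one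
element of `R₁` mapping `ω` to `ω'`. -/
theorem R1_regular (k r : ℕ) (hk0 : 0 < k) (hk : Odd k) (hr : r = 1 ∨ r = 3) :
    ∀ ω ω' : ZMod 8 × ZMod k × ZMod r,
      ∃! g : Equiv.Perm (ZMod 8 × ZMod k × ZMod r), g ∈ R1 k r ∧ g ω = ω' := by
  intro ω ω'
  have : NeZero k := ⟨hk0.ne'⟩
  have : NeZero r := ⟨by lia⟩
  obtain ⟨g, hg, hgω⟩ := exists_mem_R1_apply_eq k r ω ω'
  exact ⟨g, ⟨hg, hgω⟩, fun h hh => eq_of_mem_R1_of_apply_eq hh.1 hg (hh.2.trans hgω.symm)⟩
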